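/- Let n ≥ 2 be even and let k_1,…,k_{n+2} be positive natural numbers. Then 3·a_n − a_{n−2} ≤ 𝔉c([k_1, …, k_{n+2}]) ≤ Fib(n+3) + Fib(n+1), where (a_k) is the Padovan sequence and Fib is the Fibonacci sequence with Fib(1) = Fib(2) = 1; both bounds are attained (the lower bound when all k_i = 1 and the upper bound when all k_i = 2). -/

import Mathlib

/-- The open-chain AND-OR network map determined by an operator list `ops`
(`true` = AND, `false` = OR), on `ops.length + 2` nodes. -/
def chainMap (ops : List Bool) (x : Fin (ops.length + 2) → Bool) :
    Fin (ops.length + 2) → Bool := fun i =>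
  if h0 : (i : ℕ) = 0 then x ⟨1, by omega⟩
  else if hn : (i : ℕ) = ops.length + 1 then x ⟨ops.length, by omega⟩
  else
    have hi : 1 ≤ (i : ℕ) ∧ (i : ℕ) ≤ ops.length := by
      have := i.isLt; omega
    if ops.get ⟨(i : ℕ) - 1, by omega⟩
    then x ⟨(i : ℕ) - 1, by omega⟩ && x ⟨(i : ℕ) + 1, by omega⟩
    else x ⟨(i : ℕ) - 1, by omega⟩ || x ⟨(i : ℕ) + 1, by omega⟩

/-- `F ops` is the number of fixed points of the open-chain AND-OR network. -/
noncomputable def F (ops : List Bool) : ℕ :=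
  Nat.card {x : Fin (ops.length + 2) → Bool // chainMap ops x = x}

/-- Run-length encoding: block `j` (1-based) consists of `k_j` copies of
`true` if `j` is odd and `false` if `j` is even. -/
def runOps : List ℕ → List Bool
  | [] => []
  | k :: t => List.replicate k true ++ (runOps t).map (fun b => !b)

/-- `Fr L` = 𝔉(L), the number of fixed points of the open-chain AND-OR
network with run-length list `L`. -/
noncomputable def Fr (L : List ℕ) : ℕ := F (runOps L)

/-- The Padovan sequence: `a 0 = a 1 = a 2 = 1` and `a (k+3) = a (k+1) + a k`. -/
def padovan : ℕ → ℕ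
  | 0 => 1
  | 1 => 1
  | 2 => 1
  | n + 3 => padovan (n + 1) + padovan n

/-- The closed-chain AND-OR network map on `ZMod n` determined by
`ops : ZMod n → Bool` (`true` = AND, `false` = OR). -/
def cycleMap {n : ℕ} (ops : ZMod n → Bool) (x : ZMod n → Bool) :
    ZMod n → Bool := fun i =>
  if ops i then x (i - 1) && x (i + 1) else x (i - 1) || x (i + 1)

/-- `Fc ops` is the number of fixed points of the closed-chain AND-OR network. -/
noncomputable def Fc {n : ℕ} (ops : ZMod n → Bool) : ℕ :=
  Nat.card {x : ZMod n → Bool // cycleMap ops x = x}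

/-- The cyclic operator assignment for run-length list `L`: going cyclically
from index `0`, a block of `k_j` consecutive values equal to `true` if `j` is
odd and `false` if `j` is even. -/
def cOps (L : List ℕ) : ZMod L.sum → Bool :=
  fun i => (runOps L).getD i.val false

/-- `Frc L` = 𝔉c(L), the number of fixed points of the closed-chain AND-OR
network with run-length list `L`. -/
noncomputable def Frc (L : List ℕ) : ℕ := Fc (cOps L)

/-- local rule: the middle value `b` is determined by its neighbours `a`, `c`. -/
def okRule (o a b c : Bool) : Bool := b == (if o then a && c else a || c)

/-- transfer matrix -/
def TM (o : Bool) : Matrix (Bool × Bool) (Bool × Bool) ℕ :=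
  fun s t => if s.2 = t.1 ∧ okRule o s.1 s.2 t.2 = true then 1 else 0

/-- validity of an open sequence -/
def Valid (ops : List Bool) (y : Fin (ops.length + 2) → Bool) : Prop :=
  ∀ i : Fin ops.length,
    okRule ops[i] (y i.castSucc.castSucc) (y i.succ.castSucc) (y i.succ.succ) = true

instance (ops : List Bool) (y : Fin (ops.length + 2) → Bool) : Decidable (Valid ops y) := by
  unfold Valid; infer_instance

theorem valid_cons (o : Bool) (ops : List Bool) (a : Bool) (y : Fin (ops.length + 2) → Bool) :
    Valid (o :: ops) (Fin.cons a y : Fin (ops.length + 2 + 1) → Bool) ↔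
      okRule o a (y 0) (y 1) = true ∧ Valid ops y := by
  unfold Valid
  refine (Fin.forall_fin_succ (n := ops.length)).trans ?_
  refine and_congr ?_ ?_
  · exact Iff.rfl
  · exact Iff.rfl

/-- number of valid sequences with given ends -/
def cnt (ops : List Bool) (s t : Bool × Bool) : ℕ :=
  ∑ y : Fin (ops.length + 2) → Bool,
    if Valid ops y ∧ (y 0, y 1) = s ∧ (y (Fin.last ops.length).castSucc, y (Fin.last _)) = t
    then 1 else 0

theorem cnt_cons (o : Bool) (ops : List Bool) (s t : Bool × Bool) :
    cnt (o :: ops) s t = ∑ u, TM o s u * cnt ops u t := by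
  obtain ⟨a, b⟩ := s
  have h1 : cnt (o :: ops) (a, b) t = ∑ p : Bool × (Fin (ops.length + 2) → Bool),
      if (okRule o p.1 (p.2 0) (p.2 1) = true ∧ Valid ops p.2) ∧ (p.1, p.2 0) = (a, b) ∧
        (p.2 (Fin.last ops.length).castSucc, p.2 (Fin.last _)) = t then 1 else 0 := by
    unfold cnt
    symm
    refine Fintype.sum_equiv (Fin.consEquiv (fun _ : Fin (ops.length + 2 + 1) => Bool)) _ _ ?_
    rintro ⟨c, y⟩
    have := valid_cons o ops c y
    refine if_congr ?_ rfl rfl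
    exact and_congr this.symm Iff.rfl
  rw [h1, Fintype.sum_prod_type]
  simp only [cnt, Finset.mul_sum]
  rw [Finset.sum_comm, Finset.sum_comm (s := Finset.univ (α := Bool × Bool))]
  refine Finset.sum_congr rfl fun y _ => ?_
  rw [Finset.sum_eq_single a, Finset.sum_eq_single (y 0, y 1)]
  · simp only [TM]
    by_cases hb : b = y 0
    · subst hb
      by_cases h2 : okRule o a (y 0) (y 1) = true <;> simp [h2]
    · simp [hb, Ne.symm hb]
  · intro u _ hu
    simp [Ne.symm hu]
  · simp
  · intro c _ hc
    simp [hc]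
  · simp

theorem cnt_nil (s t : Bool × Bool) : cnt [] s t = (1 : Matrix (Bool × Bool) (Bool × Bool) ℕ) s t := by
  obtain ⟨a, b⟩ := s
  obtain ⟨c, d⟩ := t
  cases a <;> cases b <;> cases c <;> cases d <;> decide

theorem cnt_eq (ops : List Bool) (s t : Bool × Bool) : cnt ops s t = (ops.map TM).prod s t := by
  induction ops generalizing s t with
  | nil => simpa using cnt_nil s t
  | cons o ops ih =>
    rw [cnt_cons, List.map_cons, List.prod_cons, Matrix.mul_apply]
    simp only [ih]

theorem trace_eq (ops : List Bool) : ((ops.map TM).prod).trace =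
    Nat.card {y : Fin (ops.length + 2) → Bool // Valid ops y ∧
      (y 0, y 1) = (y (Fin.last ops.length).castSucc, y (Fin.last _))} := by
  rw [Nat.card_eq_fintype_card, Fintype.card_subtype, Finset.card_filter]
  simp only [Matrix.trace, Matrix.diag, ← cnt_eq, cnt]
  rw [Finset.sum_comm]
  refine Finset.sum_congr rfl fun y _ => ?_
  rw [Finset.sum_eq_single (y 0, y 1)]
  · refine if_congr ?_ rfl rfl
    simp [eq_comm]
  · intro u _ hu
    simp [Ne.symm hu]
  · simp

theorem cycle_iff {n : ℕ} (ops x : ZMod n → Bool) :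
    cycleMap ops x = x ↔ ∀ i, okRule (ops i) (x (i - 1)) (x i) (x (i + 1)) = true := by
  simp only [funext_iff, cycleMap, okRule, beq_iff_eq]
  exact forall_congr' fun i => eq_comm

theorem Fc_eq (ops : List Bool) (N : ℕ) (hN : ops.length = N) (h0 : 0 < N) :
    Fc (fun i : ZMod N => ops.getD i.val false) = ((ops.map TM).prod).trace := by
  subst hN
  rw [trace_eq, Fc]
  have : NeZero ops.length := ⟨h0.ne'⟩
  have hv : ∀ i : Fin ops.length, ((i : ℕ) : ZMod ops.length).val = i := fun i =>
    ZMod.val_natCast_of_lt i.2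
  have key : ∀ x : ZMod ops.length → Bool,
      cycleMap (fun i : ZMod ops.length => ops.getD i.val false) x = x ↔
      Valid ops (fun j => x (((j : ℕ) : ZMod ops.length) - 1)) := by
    intro x
    rw [cycle_iff]
    have e : ∀ i : Fin ops.length, (okRule ops[i]
        (x (((i.castSucc.castSucc : Fin _) : ℕ) - 1)) (x (((i.succ.castSucc : Fin _) : ℕ) - 1))
        (x (((i.succ.succ : Fin _) : ℕ) - 1))) =
        okRule (ops.getD ((i : ℕ) : ZMod ops.length).val false) (x ((i : ℕ) - 1)) (x (i : ℕ))
          (x ((i : ℕ) + 1)) := by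
      intro i
      rw [hv]
      have : ((i:ℕ) : ZMod ops.length) + 1 + 1 - 1 = (i:ℕ) + 1 := by ring
      simp [this]
    constructor
    · intro h i
      exact (e i).trans (h _)
    · intro h i
      have := (e ⟨i.val, ZMod.val_lt i⟩).symm.trans (h _)
      simpa using this
  refine Nat.card_congr (Equiv.ofBijective
    (fun x => ⟨fun j => x.1 (((j : ℕ) : ZMod ops.length) - 1), (key x.1).1 x.2, ?_⟩) ⟨?_, ?_⟩)
  · simp [Nat.mod_eq_of_lt]
  · rintro ⟨x, hx⟩ ⟨x', hx'⟩ h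
    simp only [Subtype.mk.injEq] at h ⊢
    funext i
    have := congrFun h ⟨i.val + 1, by have := ZMod.val_lt i; omega⟩
    simpa using this
  · rintro ⟨y, hy, hc⟩
    have hc1 : y 0 = y (Fin.last ops.length).castSucc := (Prod.ext_iff.1 hc).1
    have hc2 : y 1 = y (Fin.last _) := (Prod.ext_iff.1 hc).2
    let x : ZMod ops.length → Bool := fun i => y ⟨i.val + 1, by have := ZMod.val_lt i; omega⟩
    have hxy : (fun j : Fin (ops.length + 2) => x (((j : ℕ) : ZMod ops.length) - 1)) = y := by
      funext j
      obtain ⟨j, hj⟩ := j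
      rcases Nat.eq_zero_or_pos j with rfl | hj0
      · simp only [x]
        have e : (((0:ℕ) : ZMod ops.length) - 1).val + 1 = ops.length := by
          have h := ZMod.val_lt (((0:ℕ) : ZMod ops.length) - 1)
          have : (((((0:ℕ) : ZMod ops.length) - 1).val + 1 : ℕ) : ZMod ops.length) = 0 := by
            push_cast; simp
          rw [ZMod.natCast_eq_zero_iff] at this
          exact le_antisymm h (Nat.le_of_dvd (by omega) this)
        refine Eq.trans ?_ hc1.symm
        congr 1
        exact Fin.ext e
      · obtain ⟨j, rfl⟩ : ∃ k, j = k + 1 := ⟨j - 1, by omega⟩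
        have e : (((j + 1 : ℕ) : ZMod ops.length) - 1) = (j : ℕ) := by push_cast; ring
        simp only [e, x]
        rcases Nat.lt_or_ge j ops.length with hl | hl
        · congr 1
          exact Fin.ext (by simp [ZMod.val_natCast_of_lt hl])
        · have : j = ops.length := by omega
          subst this
          refine Eq.trans ?_ (hc2.trans ?_)
          · congr 1
            exact Fin.ext (by simp)
          · rfl
    refine ⟨⟨x, (key x).2 (by rw [hxy]; exact hy)⟩, ?_⟩
    exact Subtype.ext hxy

theorem runOps_length (L : List ℕ) : (runOps L).length = L.sum := by
  induction L with
  | nil => rfl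
  | cons k t ih => simp [runOps, ih]

/-- block product -/
def QM : Bool → List ℕ → Matrix (Bool × Bool) (Bool × Bool) ℕ
  | _, [] => 1
  | b, k :: t => TM b ^ k * QM (!b) t

theorem QM_eq (L : List ℕ) (b : Bool) :
    QM b L = (((runOps L).map (fun c => c == b)).map TM).prod := by
  induction L generalizing b with
  | nil => rfl
  | cons k t ih =>
    rw [QM, ih, runOps]
    simp only [List.map_append, List.prod_append, List.map_replicate, List.prod_replicate,
      List.map_map]
    congr 1
    · simp
    · congr 2
      funext c
      cases c <;> cases b <;> rfl

theorem Frc_eq (L : List ℕ) (h : 0 < L.sum) : Frc L = (QM true L).trace := by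
  rw [QM_eq]
  have h2 : Frc L = (((runOps L).map TM).prod).trace := Fc_eq (runOps L) L.sum (runOps_length L) h
  rw [h2]
  simp

theorem TM_pow (b : Bool) (k : ℕ) (hk : 2 ≤ k) : TM b ^ k = TM b ^ 2 := by
  have h3 : TM b ^ 3 = TM b ^ 2 := by cases b <;> decide
  induction k, hk using Nat.le_induction with
  | base => rfl
  | succ k _ ih => rw [pow_succ, ih, ← pow_succ, h3]

theorem TM_le (b : Bool) : ∀ i j, (TM b ^ 1) i j ≤ (TM b ^ 2) i j := by
  rintro ⟨p, q⟩ ⟨r, s⟩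
  cases b <;> cases p <;> cases q <;> cases r <;> cases s <;> decide

theorem TM_bounds (b : Bool) (k : ℕ) (hk : 1 ≤ k) (i j : Bool × Bool) :
    (TM b ^ 1) i j ≤ (TM b ^ k) i j ∧ (TM b ^ k) i j ≤ (TM b ^ 2) i j := by
  rcases Nat.lt_or_ge k 2 with h | h
  · obtain rfl : k = 1 := by omega
    exact ⟨le_rfl, TM_le b i j⟩
  · rw [TM_pow b k h]
    exact ⟨TM_le b i j, le_rfl⟩

theorem QM_bounds (L : List ℕ) (hpos : ∀ k ∈ L, 1 ≤ k) (b : Bool) (i j : Bool × Bool) :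
    QM b (List.replicate L.length 1) i j ≤ QM b L i j ∧
    QM b L i j ≤ QM b (List.replicate L.length 2) i j := by
  induction L generalizing b i j with
  | nil => exact ⟨le_rfl, le_rfl⟩
  | cons k t ih =>
    have hk := hpos k (by simp)
    have ih' := ih (fun k hk => hpos k (by simp [hk]))
    simp only [List.length_cons, List.replicate_succ, QM, Matrix.mul_apply]
    exact ⟨Finset.sum_le_sum fun u _ =>
        Nat.mul_le_mul (TM_bounds b k hk i u).1 (ih' (!b) u j).1,
      Finset.sum_le_sum fun u _ =>
        Nat.mul_le_mul (TM_bounds b k hk i u).2 (ih' (!b) u j).2⟩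

theorem QM_rep (c j : ℕ) :
    QM true (List.replicate (2 * j) c) = (TM true ^ c * TM false ^ c) ^ j := by
  induction j with
  | zero => rfl
  | succ j ih =>
    rw [show 2 * (j + 1) = 2 * j + 1 + 1 by ring, List.replicate_succ, List.replicate_succ, QM, QM,
      pow_succ', ← mul_assoc]
    simp only [Bool.not_true, Bool.not_false, ih]

theorem trace_one (j : ℕ) :
    ((TM true ^ 1 * TM false ^ 1) ^ (j + 2)).trace + padovan (2 * j) = 3 * padovan (2 * j + 2) := by
  set M := TM true ^ 1 * TM false ^ 1 with hM
  have hrec : M ^ 4 + M ^ 2 = M ^ 3 + M ^ 3 + M := by rw [hM]; decide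
  have hr : ∀ j, (M ^ (j + 5)).trace + (M ^ (j + 3)).trace =
      (M ^ (j + 4)).trace + (M ^ (j + 4)).trace + (M ^ (j + 2)).trace := by
    intro j
    have := congrArg (fun X => (M ^ (j + 1) * X).trace) hrec
    simpa only [mul_add, Matrix.trace_add, ← pow_add, ← pow_succ, add_assoc] using this
  have hp : ∀ m, padovan (m + 3) = padovan (m + 1) + padovan m := fun m => rfl
  induction j using Nat.strong_induction_on with
  | _ j ih =>
    match j, ih with
    | 0, _ => rw [hM]; decide
    | 1, _ => rw [hM]; decide
    | 2, _ => rw [hM]; decide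
    | j + 3, ih =>
      have h0 := ih j (by omega)
      have h1 := ih (j + 1) (by omega)
      have h2 := ih (j + 2) (by omega)
      have h := hr j
      have p3 := hp (2 * j)
      have p4 := hp (2 * j + 1)
      have p5 := hp (2 * j + 2)
      have p6 := hp (2 * j + 3)
      have p7 := hp (2 * j + 4)
      have p8 := hp (2 * j + 5)
      simp only [mul_add, add_assoc, Nat.reduceMul, Nat.reduceAdd] at *
      omega

theorem trace_two (j : ℕ) :
    ((TM true ^ 2 * TM false ^ 2) ^ (j + 1)).trace = Nat.fib (2 * j + 3) + Nat.fib (2 * j + 1) := by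
  set M := TM true ^ 2 * TM false ^ 2 with hM
  have hrec : M ^ 3 + M = M ^ 2 + M ^ 2 + M ^ 2 := by rw [hM]; decide
  have hr : ∀ j, (M ^ (j + 3)).trace + (M ^ (j + 1)).trace =
      (M ^ (j + 2)).trace + (M ^ (j + 2)).trace + (M ^ (j + 2)).trace := by
    intro j
    have := congrArg (fun X => (M ^ j * X).trace) hrec
    simpa only [mul_add, Matrix.trace_add, ← pow_add, ← pow_succ, add_assoc] using this
  induction j using Nat.strong_induction_on with
  | _ j ih =>
    match j, ih with
    | 0, _ => rw [hM]; decide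
    | 1, _ => rw [hM]; decide
    | j + 2, ih =>
      have h0 := ih j (by omega)
      have h1 := ih (j + 1) (by omega)
      have h := hr j
      have p3 := Nat.fib_add_two (n := 2 * j + 1)
      have p4 := Nat.fib_add_two (n := 2 * j + 2)
      have p5 := Nat.fib_add_two (n := 2 * j + 3)
      have p6 := Nat.fib_add_two (n := 2 * j + 4)
      have p7 := Nat.fib_add_two (n := 2 * j + 5)
      simp only [mul_add, add_assoc, Nat.reduceMul, Nat.reduceAdd] at *
      omega

/-- sharp bounds for closed chains of even run count
`n + 2` (`n ≥ 2` even):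
`3·a_n - a_{n-2} ≤ 𝔉c([k₁,…,k_{n+2}]) ≤ Fib (n+3) + Fib (n+1)`, attained
when all `kᵢ = 1` resp. all `kᵢ = 2`. -/
theorem andor_closed_chain_sharp_bounds (n : ℕ) (hn : 2 ≤ n)
    (hne : Even n) (L : List ℕ) (hlen : L.length = n + 2)
    (hpos : ∀ k ∈ L, 1 ≤ k) :
    3 * padovan n - padovan (n - 2) ≤ Frc L ∧
    Frc L ≤ Nat.fib (n + 3) + Nat.fib (n + 1) ∧
    Frc (List.replicate (n + 2) 1) = 3 * padovan n - padovan (n - 2) ∧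
    Frc (List.replicate (n + 2) 2) = Nat.fib (n + 3) + Nat.fib (n + 1) := by
  have hsum : 0 < L.sum := by
    match L, hlen with
    | k :: t, _ =>
      have := hpos k (by simp)
      simp only [List.sum_cons]; omega
  have e1 : Frc (List.replicate (n + 2) 1) = (QM true (List.replicate (n + 2) 1)).trace :=
    Frc_eq _ (by simp)
  have e2 : Frc (List.replicate (n + 2) 2) = (QM true (List.replicate (n + 2) 2)).trace :=
    Frc_eq _ (by simp)
  have b1 : Frc (List.replicate (n + 2) 1) ≤ Frc L := by
    rw [e1, Frc_eq L hsum, ← hlen]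
    exact Finset.sum_le_sum fun i _ => (QM_bounds L hpos true i i).1
  have b2 : Frc L ≤ Frc (List.replicate (n + 2) 2) := by
    rw [e2, Frc_eq L hsum, ← hlen]
    exact Finset.sum_le_sum fun i _ => (QM_bounds L hpos true i i).2
  have v1 : Frc (List.replicate (n + 2) 1) = 3 * padovan n - padovan (n - 2) := by
    obtain ⟨j, rfl⟩ : ∃ j, n = 2 * j + 2 := by
      obtain ⟨r, hr⟩ := hne
      exact ⟨r - 1, by omega⟩
    rw [e1, show 2 * j + 2 + 2 = 2 * (j + 2) by ring, QM_rep]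
    have := trace_one j
    rw [show 2 * j + 2 - 2 = 2 * j by omega]
    omega
  have v2 : Frc (List.replicate (n + 2) 2) = Nat.fib (n + 3) + Nat.fib (n + 1) := by
    obtain ⟨j, rfl⟩ : ∃ j, n = 2 * j := by
      obtain ⟨r, hr⟩ := hne
      exact ⟨r, by omega⟩
    rw [e2, show 2 * j + 2 = 2 * (j + 1) by ring, QM_rep, trace_two j]
  exact ⟨v1 ▸ b1, v2 ▸ b2, v1, v2⟩
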